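/- Case F2: Let l be an odd prime, let r ≥ 1, and let N = 4 l^r. Suppose p ≡ 1 (mod 4), the multiplicative order of p modulo l^r is φ(l^r), and f = φ(N)/2 (so f = φ(l^r)). If l ≡ 1 (mod 4), then there exists ε ∈ {1, -1, i, -i} such that G(χ) = ε p^{f/2}. If l ≡ 3 (mod 4), then there exist ε ∈ {1, -1, i, -i} and integers a, b with a² + b² = p such that G(χ) = ε · √p · p^{f/2 - 1} · (a + b i). -/

import Mathlib

open Complex Polynomial IntermediateField

/-- The complex primitive `p`-th root of unity `exp(2πi/p)`. -/
noncomputable def zetaP (p : ℕ) : ℂ := Complex.exp (2 * Real.pi * Complex.I / p)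

/-- The Gauss sum `G(χ^λ) = ∑_{x ∈ F, x ≠ 0} χ^λ(x) ζ_p^{T(x)}`, where
`T` is the trace map from `F` down to `ZMod p`. -/
noncomputable def gaussSumN (p : ℕ) {F : Type} [Field F] [Fintype F] [Algebra (ZMod p) F]
    (χ : MulChar F ℂ) (lam : ℕ) : ℂ :=
  letI : DecidableEq F := Classical.decEq F
  ∑ x ∈ Finset.univ.filter (fun x : F => x ≠ 0),
    (χ ^ lam) x * zetaP p ^ (Algebra.trace (ZMod p) F x).val

/-- `√-m = i√m ∈ ℂ`. -/
noncomputable def sqrtNeg (m : ℕ) : ℂ := Real.sqrt m * Complex.I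

theorem sqrtNeg_sq (m : ℕ) : sqrtNeg m ^ 2 = -(m : ℂ) := by
  have h : ((Real.sqrt m : ℝ) : ℂ) ^ 2 = ((m : ℝ) : ℂ) := by
    rw [← Complex.ofReal_pow, Real.sq_sqrt (by positivity)]
  simp only [sqrtNeg, mul_pow, Complex.I_sq, h]
  push_cast
  ring

theorem isIntegral_sqrtNeg (m : ℕ) : IsIntegral ℚ (sqrtNeg m) := by
  refine ⟨X ^ 2 + C (m : ℚ), monic_X_pow_add_C _ (by norm_num), ?_⟩
  simp [sqrtNeg_sq]

/-- The class number `h(ℚ(√-m))` of the quadratic field `ℚ(√-m) ⊆ ℂ`. -/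
noncomputable def classNumSqrtNeg (m : ℕ) : ℕ :=
  haveI : FiniteDimensional ℚ ℚ⟮sqrtNeg m⟯ :=
    IntermediateField.adjoin.finiteDimensional (isIntegral_sqrtNeg m)
  haveI : CharZero ℚ⟮sqrtNeg m⟯ :=
    charZero_of_injective_algebraMap (algebraMap ℚ ℚ⟮sqrtNeg m⟯).injective
  haveI : NumberField ℚ⟮sqrtNeg m⟯ := ⟨⟩
  NumberField.classNumber ℚ⟮sqrtNeg m⟯

/-- `√p* = √p` if `p ≡ 1 (mod 4)` and `i√p` if `p ≡ 3 (mod 4)`. -/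
noncomputable def sqrtPStar (p : ℕ) : ℂ :=
  if p % 4 = 1 then (Real.sqrt p : ℂ) else (Real.sqrt p : ℂ) * Complex.I

/-!
Let `ψ` be the additive character `a ↦ ζ_p ^ a` of `𝔽_p`, let `G` be the Gauss sum of `χ` over `F`,
and let `g` be the Gauss sum of the restriction of `χ` to `𝔽_p`. That restriction has order `2 ^ e`,
where `l ≡ 2 * e + 1 (mod 4)`, so `g ^ 2 = p ^ e`, and it suffices to show that
`w = G * g / p ^ (f / 2)` is a Gaussian integer of norm `p ^ e`; the norm is immediate from
`‖G‖ ^ 2 = p ^ f`.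

* Being trivial or quadratic, the restriction is its own inverse, so `G * g = p * E`, where `E` is
  the sum of `χ` over the elements of trace `-1`. Frobenius permutes these elements, so
  `φ(l ^ r) * E` is a sum of orbit sums `∑ i, z ^ p ^ i` with `z` a root of unity of order dividing
  `4 * l ^ r`. As `p ≡ 1 (mod 4)` generates `(ℤ/l^r)ˣ`, the exponents `p ^ i` run through the units
  modulo `4 * l ^ r` that are congruent to `1` modulo `4`, and these sums lie in `ℤ[i]`.
* `w` is an algebraic integer. At a valuation ring above `p`, `χ⁻¹` is a power `τ ^ n` of the
  inverse Teichmüller character `τ` and, as in Stickelberger's theorem, the Gauss sum of `τ ^ n`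
  divides `(ζ_p - 1) ^ s(n)`, with `s(n)` the sum of the base `p` digits of `n`. Since `G` times a
  Gauss sum of `χ⁻¹` is `p ^ f`, this bounds the valuation of `G` from below. The digit sums are
  sums of residues `p ^ i * c % (4 * l ^ r)`, evaluated by the above description of the `p ^ i`.

Since `ℤ[i]` is integrally closed, `w` lies in `ℤ[i]`.
-/

theorem addChar_zmod_apply_eq_pow_val {p : ℕ} [NeZero p] {M : Type*} [Monoid M]
    (ψ : AddChar (ZMod p) M) (a : ZMod p) : ψ a = ψ 1 ^ a.val := by
  rw [← AddChar.map_nsmul_eq_pow, nsmul_one, ZMod.natCast_zmod_val]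

theorem addChar_zmod_apply_pow_eq_one {p : ℕ} {M : Type*} [Monoid M]
    (ψ : AddChar (ZMod p) M) (a : ZMod p) : ψ a ^ p = 1 := by
  rw [← AddChar.map_nsmul_eq_pow, nsmul_eq_mul, CharP.cast_eq_zero, zero_mul,
    AddChar.map_zero_eq_one]

theorem isPrimitiveRoot_addChar_zmod_apply_one {p : ℕ} [Fact p.Prime] {M : Type*} [CommMonoid M]
    {ψ : AddChar (ZMod p) M} (hψ : ψ ≠ 1) : IsPrimitiveRoot (ψ 1) p := by
  refine IsPrimitiveRoot.iff_orderOf.mpr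
    (orderOf_eq_prime (addChar_zmod_apply_pow_eq_one ψ 1) fun h ↦ hψ ?_)
  ext a
  rw [addChar_zmod_apply_eq_pow_val, h, one_pow, AddChar.one_apply]

theorem trace_pow_card (K : Type*) {F : Type*} [Field K] [Fintype K] [Field F] [Algebra K F]
    [Algebra.IsAlgebraic K F] (x : F) :
    Algebra.trace K F (x ^ Fintype.card K) = Algebra.trace K F x :=
  Algebra.trace_eq_of_algEquiv (FiniteField.frobeniusAlgEquivOfAlgebraic K F) x

section TraceCharacter

variable {K F R : Type*} [Field K] [Field F] [Algebra K F] [CommRing R]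

variable (F) in
/-- The lift `ψ ∘ Tr` of an additive character `ψ` of `K` to the extension field `F`. -/
noncomputable def traceChar {M : Type*} [Monoid M] (ψ : AddChar K M) : AddChar F M :=
  ψ.compAddMonoidHom (Algebra.trace K F).toAddMonoidHom

@[simp]
theorem traceChar_apply {M : Type*} [Monoid M] (ψ : AddChar K M) (x : F) :
    traceChar F ψ x = ψ (Algebra.trace K F x) := rfl

theorem traceChar_inv (ψ : AddChar K R) : (traceChar F ψ)⁻¹ = traceChar F ψ⁻¹ := by
  ext x
  simp [AddChar.inv_apply]

theorem traceChar_ne_one [FiniteDimensional K F] [Algebra.IsSeparable K F] {ψ : AddChar K R}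
    (hψ : ψ ≠ 1) : traceChar F ψ ≠ 1 := by
  obtain ⟨a, ha⟩ := AddChar.ne_one_iff.mp hψ
  obtain ⟨x, rfl⟩ := Algebra.trace_surjective K F a
  exact AddChar.ne_one_iff.mpr ⟨x, ha⟩

theorem traceChar_apply_pow_char {p : ℕ} [Fact p.Prime] [Finite F] [Algebra (ZMod p) F]
    (ψ : AddChar (ZMod p) R) (x : F) : traceChar F ψ (x ^ p) = traceChar F ψ x := by
  rw [traceChar_apply, traceChar_apply, ← trace_pow_card (ZMod p) x, ZMod.card]

end TraceCharacter

section GaussSumDivisibility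

variable {F R : Type*} [Field F] [Fintype F] [CommRing R]

theorem map_gaussSum {R' : Type*} [CommRing R'] (φ : R →+* R') (χ : MulChar F R)
    (ψ : AddChar F R) :
    φ (gaussSum χ ψ) = gaussSum (χ.ringHomComp φ) ((φ : R →* R').compAddChar ψ) := by
  simp [gaussSum, MulChar.ringHomComp_apply]

variable {ψ : AddChar F R}

theorem gaussSum_pow_char (p : ℕ) [Fact p.Prime] [CharP F p] (hψ : ∀ x, ψ (x ^ p) = ψ x)
    (χ : MulChar F R) : gaussSum (χ ^ p) ψ = gaussSum χ ψ := by
  refine Fintype.sum_bijective (frobeniusEquiv F p) (frobeniusEquiv F p).bijective _ _ fun x ↦ ?_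
  rw [frobeniusEquiv_apply, frobenius_def, map_pow, hψ,
    MulChar.pow_apply' _ (Fact.out : p.Prime).ne_zero]

variable [IsDomain R]

theorem gaussSum_mul_dvd_gaussSum_mul_gaussSum (hψ : ψ ≠ 1) (χ φ : MulChar F R) :
    gaussSum (χ * φ) ψ ∣ gaussSum χ ψ * gaussSum φ ψ := by
  by_cases h : χ * φ = 1
  · rw [h, gaussSum_one_left hψ]
    exact isUnit_one.neg.dvd
  · exact ⟨_, (jacobiSum_mul_nontrivial h ψ).symm⟩

theorem gaussSum_pow_dvd_gaussSum_pow (hψ : ψ ≠ 1) (χ : MulChar F R) (n : ℕ) :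
    gaussSum (χ ^ n) ψ ∣ gaussSum χ ψ ^ n := by
  induction n with
  | zero => rw [pow_zero, gaussSum_one_left hψ]; exact isUnit_one.neg.dvd
  | succ n ih =>
    rw [pow_succ, pow_succ]
    exact (gaussSum_mul_dvd_gaussSum_mul_gaussSum hψ _ _).trans (mul_dvd_mul_right ih _)

theorem gaussSum_pow_dvd_gaussSum_pow_sum_digits {p : ℕ} [hp : Fact p.Prime] [CharP F p]
    (hψ₁ : ψ ≠ 1) (hψ : ∀ x, ψ (x ^ p) = ψ x) (χ : MulChar F R) (k : ℕ) :
    gaussSum (χ ^ k) ψ ∣ gaussSum χ ψ ^ (p.digits k).sum := by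
  induction k using Nat.strong_induction_on with
  | _ k ih =>
    rcases k.eq_zero_or_pos with rfl | hk
    · simpa using gaussSum_pow_dvd_gaussSum_pow hψ₁ χ 0
    · have hk' : χ ^ k = χ ^ (k % p) * (χ ^ (k / p)) ^ p := by
        rw [← pow_mul, ← pow_add, mul_comm (k / p), Nat.mod_add_div]
      rw [Nat.digits_def' hp.out.one_lt hk, List.sum_cons, pow_add, hk']
      refine (gaussSum_mul_dvd_gaussSum_mul_gaussSum hψ₁ _ _).trans (mul_dvd_mul ?_ ?_)
      · exact gaussSum_pow_dvd_gaussSum_pow hψ₁ χ _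
      · rw [gaussSum_pow_char p hψ]
        exact ih _ (Nat.div_lt_self hk hp.out.one_lt)

end GaussSumDivisibility

theorem sub_one_pow_dvd_of_isPrimitiveRoot {R : Type*} [CommRing R] [IsDomain R] {p : ℕ}
    (hp : p.Prime) {ζ : R} (hζ : IsPrimitiveRoot ζ p) : (ζ - 1) ^ (p - 1) ∣ (p : R) := by
  obtain ⟨n, rfl⟩ := Nat.exists_eq_add_one_of_ne_zero hp.ne_zero
  have hprod := Finset.prod_dvd_prod_of_dvd (s := Finset.range n) (fun _ ↦ ζ - 1)
    (fun k ↦ 1 - ζ ^ (k + 1)) fun k _ ↦ by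
      rw [← dvd_neg, neg_sub]
      exact sub_one_dvd_pow_sub_one ζ (k + 1)
  rw [hζ.prod_one_sub_pow_eq_order] at hprod
  simpa using hprod

theorem sum_inv_mul_algebraMap_trace (K F : Type*) [Field K] [Field F] [Fintype F]
    [Algebra K F] : ∑ x : F, x⁻¹ * algebraMap K F (Algebra.trace K F x) = -1 := by
  classical
  have : Finite K := Finite.of_injective _ (algebraMap K F).injective
  have hK : 1 < Nat.card K := Finite.one_lt_card
  have hcard : Fintype.card F = Nat.card K ^ Module.finrank K F := by
    rw [← Nat.card_eq_fintype_card, Module.natCard_eq_pow_finrank (K := K)]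
  simp only [FiniteField.algebraMap_trace_eq_sum_pow, Finset.mul_sum]
  rw [Finset.sum_comm, Finset.sum_eq_single_of_mem 0 (by simp [Module.finrank_pos])]
  · have hterm (x : F) : x⁻¹ * x ^ Nat.card K ^ 0 = 1 - if x = 0 then 1 else 0 := by
      split_ifs with hx <;> simp [hx]
    simp only [hterm]
    simp
  · intro i hi hi0
    have hpos : 1 < Nat.card K ^ i := Nat.one_lt_pow hi0 hK
    have hlt : Nat.card K ^ i < Nat.card K ^ Module.finrank K F :=
      Nat.pow_lt_pow_right hK (Finset.mem_range.mp hi)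
    rw [← FiniteField.sum_pow_lt_card_sub_one (K := F) (Nat.card K ^ i - 1) (by omega)]
    refine Finset.sum_congr rfl fun x _ ↦ ?_
    rcases eq_or_ne x 0 with rfl | hx
    · rw [inv_zero, zero_mul, zero_pow (by omega)]
    · rw [inv_mul_eq_iff_eq_mul₀ hx, mul_pow_sub_one (by omega)]

section Teichmuller

variable {p : ℕ} [Fact p.Prime] {F R k : Type*} [Field F] [Fintype F] [Algebra (ZMod p) F]
  [CommRing R] [Field k] {π : R →+* k} {ι : F →+* k} {ω : MulChar F R}

theorem map_addChar_zmod_eq_one [CharP k p] (π : R →+* k) (ψ : AddChar (ZMod p) R) :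
    π (ψ 1) = 1 := by
  rw [← sub_eq_zero, ← pow_eq_zero_iff (Fact.out : p.Prime).ne_zero, sub_pow_expChar, ← map_pow,
    addChar_zmod_apply_pow_eq_one, map_one, one_pow, sub_self]

theorem map_sum_inv_mul_geom_sum (hω : ∀ x, π (ω x) = ι x) (ψ : AddChar (ZMod p) R) :
    π (∑ x, ω⁻¹ x * ∑ j ∈ Finset.range (Algebra.trace (ZMod p) F x).val, ψ 1 ^ j) = -1 := by
  have : CharP F p := charP_of_injective_algebraMap (algebraMap (ZMod p) F).injective p
  have : CharP k p := charP_of_injective_ringHom ι.injective p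
  have hterm (x : F) : π (ω⁻¹ x * ∑ j ∈ Finset.range (Algebra.trace (ZMod p) F x).val, ψ 1 ^ j) =
      ι (x⁻¹ * algebraMap (ZMod p) F (Algebra.trace (ZMod p) F x)) := by
    conv_rhs => rw [← ZMod.natCast_zmod_val (Algebra.trace (ZMod p) F x)]
    rw [map_mul, MulChar.inv_apply', hω, map_sum]
    simp [map_addChar_zmod_eq_one, -ZMod.natCast_val]
  rw [map_sum, Finset.sum_congr rfl fun x _ ↦ hterm x, ← map_sum,
    sum_inv_mul_algebraMap_trace, map_neg, map_one]

variable [IsDomain R]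

theorem gaussSum_inv_eq_sub_one_mul_sum {ω : MulChar F R} (hω : ω ≠ 1)
    (ψ : AddChar (ZMod p) R) :
    gaussSum ω⁻¹ (traceChar F ψ) = (ψ 1 - 1) *
      ∑ x, ω⁻¹ x * ∑ j ∈ Finset.range (Algebra.trace (ZMod p) F x).val, ψ 1 ^ j := by
  rw [← sub_zero (gaussSum _ _), ← MulChar.sum_eq_zero_of_ne_one (inv_ne_one.mpr hω), gaussSum,
    ← Finset.sum_sub_distrib, Finset.mul_sum]
  refine Finset.sum_congr rfl fun x _ ↦ ?_
  rw [mul_left_comm, mul_geom_sum, traceChar_apply, addChar_zmod_apply_eq_pow_val]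
  ring

theorem gaussSum_inv_dvd_sub_one [IsLocalHom π] (hω : ∀ x, π (ω x) = ι x)
    {ψ : AddChar (ZMod p) R} (hψ : ψ ≠ 1) : gaussSum ω⁻¹ (traceChar F ψ) ∣ ψ 1 - 1 := by
  rcases eq_or_ne ω 1 with rfl | hω₁
  · rw [inv_one, gaussSum_one_left (traceChar_ne_one hψ)]
    exact isUnit_one.neg.dvd
  · rw [gaussSum_inv_eq_sub_one_mul_sum hω₁]
    refine (IsUnit.mul_right_dvd ?_).mpr dvd_rfl
    refine isUnit_of_map_unit π _ ?_
    rw [map_sum_inv_mul_geom_sum hω]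
    exact isUnit_one.neg

theorem gaussSum_inv_pow_dvd [IsLocalHom π] (hω : ∀ x, π (ω x) = ι x)
    {ψ : AddChar (ZMod p) R} (hψ : ψ ≠ 1) (n : ℕ) :
    gaussSum (ω⁻¹ ^ n) (traceChar F ψ) ∣ (ψ 1 - 1) ^ (p.digits n).sum :=
  have : CharP F p := charP_of_injective_algebraMap (algebraMap (ZMod p) F).injective p
  (gaussSum_pow_dvd_gaussSum_pow_sum_digits (traceChar_ne_one hψ) (traceChar_apply_pow_char ψ)
    ω⁻¹ n).trans (pow_dvd_pow_of_dvd (gaussSum_inv_dvd_sub_one hω hψ) _)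

end Teichmuller

theorem exists_mulChar_map_eq {F R k : Type*} [Field F] [Fintype F] [CommRing R] [IsDomain R]
    [Field k] (π : R →+* k) (ι : F →+* k) {ζ : R} (hζ : IsPrimitiveRoot ζ (Fintype.card F - 1)) :
    ∃ ω : MulChar F R, ∀ x, π (ω x) = ι x := by
  classical
  have hcard : Fintype.card Fˣ = Fintype.card F - 1 := Fintype.card_units F
  have hpos : 0 < Fintype.card Fˣ := Fintype.card_pos
  obtain ⟨u, hu⟩ := IsCyclic.exists_generator (α := Fˣ)
  have hroot : ∏ η ∈ Polynomial.nthRootsFinset (Fintype.card Fˣ) (1 : R), (ι u - π η) = 0 := by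
    have h := congrArg (Polynomial.eval₂ π (ι u))
      (Polynomial.X_pow_sub_one_eq_prod hpos (hcard ▸ hζ))
    rw [Polynomial.eval₂_finsetProd] at h
    simpa [← map_pow, ← Units.val_pow_eq_pow_val, pow_card_eq_one, eq_comm] using h
  obtain ⟨η, hη, hηu⟩ := Finset.prod_eq_zero_iff.mp hroot
  have hη₁ : η ^ Fintype.card Fˣ = 1 := (Polynomial.mem_nthRootsFinset hpos _).mp hη
  have hmem : Units.ofPowEqOne η _ hη₁ hpos.ne' ∈ rootsOfUnity (Fintype.card Fˣ) R :=
    Units.pow_ofPowEqOne hη₁ hpos.ne'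
  refine ⟨MulChar.ofRootOfUnity hmem hu, fun x ↦ ?_⟩
  rcases eq_or_ne x 0 with rfl | hx
  · rw [MulChar.map_zero, map_zero, map_zero]
  · obtain ⟨j, hj⟩ := mem_powers_iff_mem_zpowers.mpr (hu (Units.mk0 x hx))
    obtain rfl : (u : F) ^ j = x := congrArg Units.val hj
    rw [map_pow, map_pow, MulChar.ofRootOfUnity_spec, Units.val_ofPowEqOne, map_pow,
      sub_eq_zero.mp hηu]

theorem orderOf_eq_card_sub_one_of_map_eq {F R k : Type*} [Field F] [Fintype F] [CommRing R]
    [Field k] {π : R →+* k} {ι : F →+* k} {ω : MulChar F R} (hω : ∀ x, π (ω x) = ι x) :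
    orderOf ω = Fintype.card F - 1 := by
  classical
  have hcard : Fintype.card Fˣ = Fintype.card F - 1 := Fintype.card_units F
  refine Nat.dvd_antisymm (hcard ▸ orderOf_dvd_of_pow_eq_one ω.pow_card_eq_one) ?_
  obtain ⟨u, hu⟩ := IsCyclic.exists_generator (α := Fˣ)
  rw [← hcard, ← Nat.card_eq_fintype_card, ← orderOf_eq_card_of_forall_mem_zpowers hu,
    orderOf_dvd_iff_pow_eq_one]
  have hu₁ : (ω ^ orderOf ω) u = 1 := by rw [pow_orderOf_eq_one, MulChar.one_apply_coe]
  refine Units.ext (ι.injective ?_)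
  rw [Units.val_pow_eq_pow_val, map_pow, ← hω, ← map_pow, ← MulChar.pow_apply_coe, hu₁]
  simp

theorem exists_pow_eq_of_orderOf_eq_card {G : Type*} [Group G] [Finite G] {g : G}
    (hg : orderOf g = Nat.card G) (x : G) : ∃ i < orderOf g, g ^ i = x := by
  classical
  have hx : x ∈ Submonoid.powers g := by
    rw [mem_powers_iff_mem_zpowers,
      Subgroup.eq_top_of_card_eq (Subgroup.zpowers g) (by rw [Nat.card_zpowers, hg])]
    exact Subgroup.mem_top x
  simpa using mem_powers_iff_mem_range_orderOf.mp hx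

theorem natCard_mulChar_eq_card_sub_one {F K : Type*} [Field F] [Fintype F] [Field K]
    [HasEnoughRootsOfUnity K (Monoid.exponent Fˣ)] :
    Nat.card (MulChar F K) = Fintype.card F - 1 := by
  classical
  rw [MulChar.card_eq_card_units_of_hasEnoughRootsOfUnity, Nat.card_eq_fintype_card,
    Fintype.card_units]

theorem isAlgClosed_residueField {K : Type*} [Field K] [IsAlgClosed K] (V : ValuationSubring K) :
    IsAlgClosed (IsLocalRing.ResidueField V) := by
  refine IsAlgClosed.of_exists_root _ fun P hP hirr ↦ ?_
  obtain ⟨Q, rfl, hdeg, hQ⟩ := Polynomial.lifts_and_degree_eq_and_monic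
    (Polynomial.mem_lifts_of_surjective IsLocalRing.residue_surjective P) hP
  obtain ⟨x, hx⟩ := IsAlgClosed.exists_aeval_eq_zero K Q (hdeg ▸ hirr.degree_pos.ne')
  obtain ⟨y, rfl⟩ := IsIntegrallyClosed.algebraMap_eq_of_integral (⟨Q, hQ, hx⟩ : IsIntegral V x)
  refine ⟨IsLocalRing.residue V y, ?_⟩
  rw [Polynomial.aeval_algebraMap_apply_eq_algebraMap_eval,
    FaithfulSMul.algebraMap_eq_zero_iff] at hx
  rw [Polynomial.eval_map_apply, hx, map_zero]

section DigitSum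

theorem sum_digits_eq_mod_add_sum_digits_div {b : ℕ} (hb : 1 < b) (n : ℕ) :
    (b.digits n).sum = n % b + (b.digits (n / b)).sum := by
  rcases n.eq_zero_or_pos with rfl | hn
  · simp
  · rw [Nat.digits_def' hb hn, List.sum_cons]

/- This is long division of `c` by `N` in base `b`: the quotient digits are `b * rᵢ / N`, where
`rᵢ = b ^ i * c % N` are the successive remainders. -/
theorem mul_sum_digits_pow_mul_div_add_mod {b N c : ℕ} (hb : 1 < b) (hc : c < N) (n : ℕ) :
    N * (b.digits (b ^ n * c / N)).sum + b ^ n * c % N =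
      (b - 1) * ∑ i ∈ Finset.range n, b ^ i * c % N + c := by
  have hN : 0 < N := by omega
  induction n with
  | zero => simp [Nat.div_eq_of_lt hc, Nat.mod_eq_of_lt hc]
  | succ n ih =>
    set s := b ^ n * c % N with hs
    have hsplit : b ^ (n + 1) * c = b * s + b * (b ^ n * c / N) * N := by
      rw [pow_succ', mul_assoc]
      conv_lhs => rw [← Nat.mod_add_div (b ^ n * c) N]
      ring
    have hdigit : b * s / N < b :=
      Nat.div_lt_of_lt_mul (mul_comm N b ▸ Nat.mul_lt_mul_of_pos_left (Nat.mod_lt _ hN) (by omega))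
    have hdiv : b ^ (n + 1) * c / N = b * s / N + b * (b ^ n * c / N) := by
      rw [hsplit, Nat.add_mul_div_right _ _ hN]
    have hmod : b ^ (n + 1) * c % N = b * s % N := by
      rw [hsplit, Nat.add_mul_mod_self_right]
    rw [sum_digits_eq_mod_add_sum_digits_div hb, hdiv, hmod, Nat.add_mul_mod_self_left,
      Nat.mod_eq_of_lt hdigit, Nat.add_mul_div_left _ _ (by omega), Nat.div_eq_of_lt hdigit,
      Finset.sum_range_succ, zero_add, ← hs, mul_add, mul_add]
    have hbs : b * s = (b - 1) * s + s := by
      rw [← Nat.succ_mul, Nat.succ_eq_add_one, Nat.sub_add_cancel hb.le]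
    linarith [Nat.mod_add_div (b * s) N]

theorem mul_sum_digits_mul_eq {b N m n c : ℕ} (hb : 1 < b) (hc : c < N)
    (h : b ^ n = 1 + N * m) :
    N * (b.digits (m * c)).sum = (b - 1) * ∑ i ∈ Finset.range n, b ^ i * c % N := by
  have hbc : b ^ n * c = c + N * (m * c) := by rw [h]; ring
  have hmain := mul_sum_digits_pow_mul_div_add_mod hb hc n
  rw [hbc, Nat.add_mul_div_left _ _ (by omega), Nat.add_mul_mod_self_left, Nat.div_eq_of_lt hc,
    Nat.mod_eq_of_lt hc, zero_add] at hmain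
  exact Nat.add_right_cancel hmain

end DigitSum

theorem exists_coprime_pow_eq {G : Type*} [Monoid G] {τ χ : G} (hτ : 0 < orderOf τ)
    (hχ : χ ∈ Submonoid.powers τ) :
    ∃ c < orderOf χ, c.Coprime (orderOf χ) ∧ τ ^ (orderOf τ / orderOf χ * c) = χ := by
  obtain ⟨n, rfl⟩ := hχ
  have hτ' : IsOfFinOrder τ := orderOf_pos_iff.mp hτ
  set g := (orderOf τ).gcd n
  have hg₀ : 0 < g := Nat.gcd_pos_of_pos_left _ hτ
  have hN : orderOf (τ ^ n) = orderOf τ / g := IsOfFinOrder.orderOf_pow τ n hτ'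
  have hN' : orderOf (τ ^ g) = orderOf (τ ^ n) := by
    rw [hN, orderOf_pow_of_dvd hg₀.ne' (Nat.gcd_dvd_left _ _)]
  refine ⟨n / g % orderOf (τ ^ n), Nat.mod_lt _ ?_, ?_, ?_⟩
  · exact (hτ'.pow).orderOf_pos
  · rw [ZMod.coprime_mod_iff_coprime, hN]
    exact (Nat.coprime_div_gcd_div_gcd hg₀).symm
  · rw [pow_mul, hN, Nat.div_div_self (Nat.gcd_dvd_left _ _) hτ.ne', ← hN, ← hN',
      pow_mod_orderOf, ← pow_mul, Nat.mul_div_cancel' (Nat.gcd_dvd_right _ _)]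

section Valuation

variable {K : Type*} [Field K] (V : ValuationSubring K)

theorem mem_valuationSubring_of_isIntegral {x : K} (hx : IsIntegral ℤ x) : x ∈ V := by
  obtain ⟨y, rfl⟩ := IsIntegrallyClosed.algebraMap_eq_of_integral (hx.tower_top (A := V))
  exact y.2

theorem div_mem_valuationSubring_of_dvd {x y : V} (h : x ∣ y) : (y / x : K) ∈ V := by
  obtain ⟨z, rfl⟩ := h
  rcases eq_or_ne x 0 with rfl | hx
  · simp
  · rw [V.coe_mul, mul_div_cancel_left₀ _ (by simpa using hx)]
    exact z.2

theorem natCast_div_sub_one_pow_mem {p : ℕ} (hp : p.Prime) {ζ : K} (hζ : IsPrimitiveRoot ζ p) :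
    (p : K) / (ζ - 1) ^ (p - 1) ∈ V := by
  have hζV : ζ ∈ V := mem_valuationSubring_of_isIntegral V (hζ.isIntegral hp.pos)
  have hζ' : IsPrimitiveRoot (⟨ζ, hζV⟩ : V) p :=
    .of_map_of_injective (f := V.subtype) hζ V.subtype_injective
  simpa using div_mem_valuationSubring_of_dvd V (sub_one_pow_dvd_of_isPrimitiveRoot hp hζ')

theorem exists_addChar_compAddChar_subtype_eq {p : ℕ} [Fact p.Prime] (ψ : AddChar (ZMod p) K) :
    ∃ ψ' : AddChar (ZMod p) V, (V.subtype : V →* K).compAddChar ψ' = ψ := by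
  have hψ (a : ZMod p) : ψ a ∈ V := by
    refine mem_valuationSubring_of_isIntegral V (.of_pow (Fact.out : p.Prime).pos ?_)
    rw [addChar_zmod_apply_pow_eq_one]
    exact isIntegral_one
  exact ⟨⟨fun a ↦ ⟨ψ a, hψ a⟩, by ext; simp, fun a b ↦ by ext; simp [AddChar.map_add_eq_mul]⟩,
    by ext; simp⟩

variable [IsAlgClosed K] [CharZero K] {p : ℕ} [Fact p.Prime] {F : Type*} [Field F]
  [Algebra (ZMod p) F] {V}

theorem exists_mulChar_residue_eq [Finite F] (hp : (p : V) ∈ nonunits V) :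
    ∃ (ω : MulChar F V) (ι : F →+* IsLocalRing.ResidueField V),
      ∀ x, IsLocalRing.residue V (ω x) = ι x := by
  have := Fintype.ofFinite F
  have := isAlgClosed_residueField V
  have : CharP (IsLocalRing.ResidueField V) p := by
    rw [CharP.charP_iff_prime_eq_zero Fact.out, ← map_natCast (IsLocalRing.residue V),
      IsLocalRing.residue_eq_zero_iff]
    exact hp
  let := ZMod.algebra (IsLocalRing.ResidueField V) p
  have : NeZero ((Fintype.card F - 1 : ℕ) : K) :=
    ⟨Nat.cast_ne_zero.mpr (Nat.sub_pos_of_lt Fintype.one_lt_card).ne'⟩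
  obtain ⟨ζ, hζ⟩ := HasEnoughRootsOfUnity.exists_primitiveRoot K (Fintype.card F - 1)
  have hζV : ζ ∈ V := mem_valuationSubring_of_isIntegral V
    (hζ.isIntegral (Nat.sub_pos_of_lt Fintype.one_lt_card))
  have hζ' : IsPrimitiveRoot (⟨ζ, hζV⟩ : V) (Fintype.card F - 1) :=
    .of_map_of_injective (f := V.subtype) hζ V.subtype_injective
  obtain ⟨ω, hω⟩ := exists_mulChar_map_eq (IsLocalRing.residue V)
    (IsAlgClosed.lift : F →ₐ[ZMod p] IsLocalRing.ResidueField V).toRingHom hζ'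
  exact ⟨ω, _, hω⟩

variable [Fintype F]

theorem exists_orderOf_eq_and_sub_one_pow_div_gaussSum_mem (hp : (p : V) ∈ nonunits V)
    {ψ : AddChar (ZMod p) K} (hψ : ψ ≠ 1) :
    ∃ τ : MulChar F K, orderOf τ = Fintype.card F - 1 ∧
      ∀ n, (ψ 1 - 1) ^ (p.digits n).sum / gaussSum (τ ^ n) (traceChar F ψ) ∈ V := by
  obtain ⟨ω, ι, hω⟩ := exists_mulChar_residue_eq (F := F) hp
  obtain ⟨ψ, rfl⟩ := exists_addChar_compAddChar_subtype_eq V ψ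
  have hψ' : ψ ≠ 1 := by rintro rfl; exact hψ (by ext; simp)
  refine ⟨ω⁻¹.ringHomComp V.subtype, ?_, fun n ↦ ?_⟩
  · rw [← orderOf_eq_card_sub_one_of_map_eq hω, ← orderOf_inv ω]
    exact orderOf_injective (MulChar.ringHomCompHom V.subtype)
      (MulChar.injective_ringHomComp V.subtype_injective) _
  · rw [MulChar.ringHomComp_pow]
    change _ / gaussSum _ ((V.subtype : V →* K).compAddChar (traceChar F ψ)) ∈ V
    rw [← map_gaussSum]
    exact div_mem_valuationSubring_of_dvd V (gaussSum_inv_pow_dvd hω hψ' n)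

theorem exists_pow_sum_div_gaussSum_pow_mem (hp : (p : V) ∈ nonunits V) {f : ℕ}
    (hcard : Fintype.card F = p ^ f) (χ : MulChar F K) {ψ : AddChar (ZMod p) K} (hψ : ψ ≠ 1) :
    ∃ c < orderOf χ, c.Coprime (orderOf χ) ∧
      (p : K) ^ (∑ i ∈ Finset.range f, p ^ i * c % orderOf χ) /
        gaussSum χ (traceChar F ψ) ^ orderOf χ ∈ V := by
  obtain ⟨τ, hτ, hmem⟩ := exists_orderOf_eq_and_sub_one_pow_div_gaussSum_mem (F := F) hp hψ
  have hq : 0 < Fintype.card F - 1 := Nat.sub_pos_of_lt Fintype.one_lt_card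
  have : NeZero ((Fintype.card F - 1 : ℕ) : K) := ⟨Nat.cast_ne_zero.mpr hq.ne'⟩
  obtain ⟨c, hc, hcop, hcχ⟩ := exists_coprime_pow_eq (hτ ▸ hq)
    ((exists_pow_eq_of_orderOf_eq_card (hτ.trans natCard_mulChar_eq_card_sub_one.symm) χ).imp
      fun _ h ↦ h.2)
  have hdvd : orderOf χ ∣ Fintype.card F - 1 := by
    classical
    exact Fintype.card_units F ▸ orderOf_dvd_of_pow_eq_one χ.pow_card_eq_one
  have hpf : p ^ f = 1 + orderOf χ * ((Fintype.card F - 1) / orderOf χ) := by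
    rw [Nat.mul_div_cancel' hdvd, ← hcard, add_comm, Nat.sub_add_cancel Fintype.card_pos]
  have hζ := isPrimitiveRoot_addChar_zmod_apply_one hψ
  have hζ₁ : ψ 1 - 1 ≠ 0 := sub_ne_zero.mpr (hζ.ne_one (Fact.out : p.Prime).one_lt)
  refine ⟨c, hc, hcop, ?_⟩
  have h := mul_mem
    (pow_mem (natCast_div_sub_one_pow_mem V Fact.out hζ)
      (∑ i ∈ Finset.range f, p ^ i * c % orderOf χ))
    (pow_mem (hmem ((Fintype.card F - 1) / orderOf χ * c)) (orderOf χ))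
  rwa [← hτ, hcχ, div_pow, div_pow, ← pow_mul, ← pow_mul', hτ,
    mul_sum_digits_mul_eq (Fact.out : p.Prime).one_lt hc hpf,
    div_mul_div_cancel₀ (pow_ne_zero _ hζ₁)] at h

end Valuation

theorem isIntegral_of_forall_mem_valuationSubring {K : Type*} [Field K] {x : K}
    (h : ∀ V : ValuationSubring K, x ∈ V) : IsIntegral ℤ x := by
  by_contra hx
  obtain ⟨V, -, hV⟩ := Subring.exists_le_valuationSubring_of_isIntegrallyClosedIn
    (R := (integralClosure ℤ K).toSubring) hx
  exact hV (h V)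

theorem isIntegral_mulChar_apply {F K : Type*} [Field F] [Finite F] [Field K] (χ : MulChar F K)
    (x : F) : IsIntegral ℤ (χ x) := by
  classical
  have := Fintype.ofFinite F
  rcases eq_or_ne x 0 with rfl | hx
  · rw [MulChar.map_zero]
    exact isIntegral_zero
  · refine .of_pow (Fintype.card_pos (α := Fˣ)) ?_
    rw [← Units.val_mk0 hx, ← MulChar.pow_apply_coe, MulChar.pow_card_eq_one, MulChar.one_apply_coe]
    exact isIntegral_one

section Integrality

variable {p : ℕ} [Fact p.Prime] {F K : Type*} [Field F] [Fintype F] [Algebra (ZMod p) F] [Field K]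

theorem isIntegral_gaussSum_traceChar (χ : MulChar F K) (ψ : AddChar (ZMod p) K) :
    IsIntegral ℤ (gaussSum χ (traceChar F ψ)) := by
  refine IsIntegral.sum _ fun x _ ↦ (isIntegral_mulChar_apply χ x).mul ?_
  refine .of_pow (Fact.out : p.Prime).pos ?_
  rw [traceChar_apply, addChar_zmod_apply_pow_eq_one]
  exact isIntegral_one

theorem gaussSum_traceChar_mul_gaussSum_inv {χ : MulChar F K} (hχ : χ ≠ 1)
    {ψ : AddChar (ZMod p) K} (hψ : ψ ≠ 1) :
    gaussSum χ (traceChar F ψ) * gaussSum χ⁻¹ (traceChar F ψ⁻¹) = Fintype.card F := by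
  rw [← traceChar_inv]
  exact gaussSum_mul_gaussSum_eq_card hχ (.of_ne_one (traceChar_ne_one hψ))

variable [CharZero K]

theorem isIntegral_card_div_gaussSum_traceChar {χ : MulChar F K} (hχ : χ ≠ 1)
    {ψ : AddChar (ZMod p) K} (hψ : ψ ≠ 1) :
    IsIntegral ℤ ((Fintype.card F : K) / gaussSum χ (traceChar F ψ)) := by
  have h := gaussSum_traceChar_mul_gaussSum_inv hχ hψ
  rw [← h, mul_div_cancel_left₀]
  · exact isIntegral_gaussSum_traceChar _ _
  · rintro h₀
    rw [h₀, zero_mul] at h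
    exact Nat.cast_ne_zero.mpr Fintype.card_ne_zero h.symm

theorem isIntegral_pow_div_gaussSum_pow [IsAlgClosed K] {f a : ℕ} (hcard : Fintype.card F = p ^ f)
    {χ : MulChar F K} (hχ : χ ≠ 1) {ψ : AddChar (ZMod p) K} (hψ : ψ ≠ 1)
    (ha : ∀ c < orderOf χ, c.Coprime (orderOf χ) →
      ∑ i ∈ Finset.range f, p ^ i * c % orderOf χ ≤ a) :
    IsIntegral ℤ ((p : K) ^ a / gaussSum χ (traceChar F ψ) ^ orderOf χ) := by
  refine isIntegral_of_forall_mem_valuationSubring fun V ↦ ?_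
  have hpV : (p : K) ∈ V := natCast_mem V p
  by_cases hp : (p : V) ∈ nonunits V
  · obtain ⟨c, hc, hcop, hmem⟩ := exists_pow_sum_div_gaussSum_pow_mem hp hcard χ hψ
    rw [← Nat.sub_add_cancel (ha c hc hcop), pow_add, mul_div_assoc]
    exact mul_mem (pow_mem hpV _) hmem
  · have hinv : (p : K)⁻¹ ∈ V := by
      obtain ⟨u, hu⟩ := not_not.mp hp
      have hu' : ((u⁻¹ : Vˣ) : V) * (p : V) = 1 := by rw [← hu, Units.inv_mul]
      have := congrArg Subtype.val hu'
      rw [← eq_inv_of_mul_eq_one_left (by simpa using this)]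
      exact (u⁻¹ : Vˣ).val.2
    have hG := mem_valuationSubring_of_isIntegral V
      (isIntegral_card_div_gaussSum_traceChar hχ hψ)
    have hG' : (gaussSum χ (traceChar F ψ))⁻¹ ∈ V := by
      convert mul_mem (pow_mem hinv f) hG using 1
      have : (p : K) ≠ 0 := Nat.cast_ne_zero.mpr (Fact.out : p.Prime).ne_zero
      rw [hcard]
      push_cast
      rw [inv_pow, mul_div_assoc', inv_mul_cancel₀ (pow_ne_zero f this), one_div]
    rw [div_eq_mul_inv, ← inv_pow]
    exact mul_mem (pow_mem hpV _) (pow_mem hG' _)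

end Integrality

section Orbit

theorem coprime_of_orderOf_eq_totient {p M : ℕ} [NeZero M]
    (hp : orderOf (p : ZMod M) = M.totient) : p.Coprime M :=
  (ZMod.isUnit_iff_coprime p M).mp
    (orderOf_pos_iff.mp (hp ▸ Nat.totient_pos.mpr (NeZero.pos M))).isUnit

theorem exists_pow_mul_modEq_of_orderOf_eq_totient {p M c x : ℕ} [NeZero M]
    (hp : orderOf (p : ZMod M) = M.totient) (hc : c.Coprime M) (hx : x.Coprime M) :
    ∃ i < M.totient, p ^ i * c ≡ x [MOD M] := by
  let u := ZMod.unitOfCoprime p (coprime_of_orderOf_eq_totient hp)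
  have hu : orderOf u = M.totient := by rw [← orderOf_units, ZMod.coe_unitOfCoprime, hp]
  have hcard : M.totient = Nat.card (ZMod M)ˣ := by
    rw [Nat.card_eq_fintype_card, ZMod.card_units_eq_totient]
  obtain ⟨i, hi, h⟩ := exists_pow_eq_of_orderOf_eq_card (hu.trans hcard)
    (ZMod.unitOfCoprime x hx * (ZMod.unitOfCoprime c hc)⁻¹)
  rw [eq_mul_inv_iff_mul_eq] at h
  refine ⟨i, hu ▸ hi, (ZMod.natCast_eq_natCast_iff _ _ _).mp ?_⟩
  simpa [u] using congrArg Units.val h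

variable {A : Type*} [AddCommMonoid A]

theorem sum_pow_mul_mod_eq_sum_filter {p m M c : ℕ} [NeZero M] (hm : 0 < m) (hmM : m.Coprime M)
    (hpm : p ≡ 1 [MOD m]) (hp : orderOf (p : ZMod M) = M.totient) (hc : c.Coprime M)
    (g : ℕ → A) :
    ∑ i ∈ Finset.range M.totient, g (p ^ i * c % (m * M)) =
      ∑ x ∈ Finset.range (m * M) with x ≡ c [MOD m] ∧ x.Coprime M, g x := by
  have hpM : p.Coprime M := coprime_of_orderOf_eq_totient hp
  have hmod (i : ℕ) : p ^ i * c ≡ c [MOD m] := by simpa using (hpm.pow i).mul_right c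
  refine Finset.sum_nbij (fun i ↦ p ^ i * c % (m * M)) (fun i _ ↦ ?_) (fun i hi j hj hij ↦ ?_)
    (fun x hx ↦ ?_) fun _ _ ↦ rfl
  · simp only [Finset.mem_filter, Finset.mem_range]
    refine ⟨Nat.mod_lt _ (Nat.mul_pos hm (NeZero.pos M)),
      ((Nat.mod_modEq _ _).of_mul_right M).trans (hmod i), ?_⟩
    rw [Nat.Coprime, Nat.ModEq.gcd_eq ((Nat.mod_modEq _ _).of_mul_left m)]
    exact (hpM.pow_left i).mul_left hc
  · have h : p ^ i ≡ p ^ j [MOD M] :=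
      Nat.ModEq.cancel_right_of_coprime hc.symm (Nat.ModEq.of_mul_left m hij)
    rw [Finset.coe_range, ← hp] at hi hj
    exact pow_injOn_Iio_orderOf hi hj (by exact_mod_cast (ZMod.natCast_eq_natCast_iff _ _ _).mpr h)
  · simp only [Finset.coe_filter, Finset.mem_range, Set.mem_ofPred_eq] at hx
    obtain ⟨hlt, hxm, hxM⟩ := hx
    obtain ⟨i, hi, h⟩ := exists_pow_mul_modEq_of_orderOf_eq_totient hp hc hxM
    have hx' := (Nat.modEq_and_modEq_iff_modEq_mul hmM).mp ⟨(hmod i).trans hxm.symm, h⟩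
    exact ⟨i, by simpa using hi, Eq.trans hx' (Nat.mod_eq_of_lt hlt)⟩

theorem sum_range_mul_filter_modEq {m : ℕ} (hm : 0 < m) (M c : ℕ) (g : ℕ → A) :
    ∑ x ∈ Finset.range (m * M) with x ≡ c [MOD m], g x =
      ∑ k ∈ Finset.range M, g (c % m + m * k) := by
  symm
  refine Finset.sum_nbij' (fun k ↦ c % m + m * k) (· / m) ?_ ?_ ?_ ?_ fun _ _ ↦ rfl
  · intro k hk
    simp only [Finset.mem_range, Finset.mem_filter] at hk ⊢
    refine ⟨?_, by simp [Nat.ModEq]⟩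
    calc c % m + m * k < m * (k + 1) := by linarith [Nat.mod_lt c hm]
      _ ≤ m * M := Nat.mul_le_mul_left m hk
  · intro x hx
    exact Finset.mem_range.mpr
      (Nat.div_lt_of_lt_mul (Finset.mem_range.mp (Finset.mem_filter.mp hx).1))
  · intro k _
    rw [Nat.add_mul_div_left _ _ hm, Nat.div_eq_of_lt (Nat.mod_lt c hm), zero_add]
  · intro x hx
    rw [← (Finset.mem_filter.mp hx).2, Nat.mod_add_div]

theorem sum_range_mul_filter_dvd {l : ℕ} (hl : 0 < l) (n : ℕ) (g : ℕ → A) :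
    ∑ x ∈ Finset.range (l * n) with l ∣ x, g x = ∑ y ∈ Finset.range n, g (l * y) := by
  simpa [Nat.modEq_zero_iff_dvd] using sum_range_mul_filter_modEq hl n 0 g

theorem sum_range_mul_filter_modEq_dvd {m l c d : ℕ} (hm : 0 < m) (hl : 0 < l)
    (hml : m.Coprime l) (hd : l * d ≡ c [MOD m]) (n : ℕ) (g : ℕ → A) :
    ∑ x ∈ Finset.range (m * (l * n)) with x ≡ c [MOD m] ∧ l ∣ x, g x =
      ∑ k ∈ Finset.range n, g (l * (d % m + m * k)) := by
  have hiff (y : ℕ) : l * y ≡ c [MOD m] ↔ y ≡ d [MOD m] :=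
    ⟨fun h ↦ (h.trans hd.symm).cancel_left_of_coprime hml, fun h ↦ (h.mul_left l).trans hd⟩
  rw [← Finset.filter_filter, Finset.filter_comm, Finset.sum_filter, mul_left_comm,
    sum_range_mul_filter_dvd hl, ← sum_range_mul_filter_modEq hm n d (g <| l * ·)]
  simp only [← Finset.sum_filter, hiff]

variable {p m l s c d : ℕ}

theorem sum_pow_mul_mod_add_sum_eq_sum (hl : l.Prime) (hm : 0 < m)
    (hml : m.Coprime l) (hpm : p ≡ 1 [MOD m])
    (hp : orderOf (p : ZMod (l ^ (s + 1))) = (l ^ (s + 1)).totient) (hc : c.Coprime l)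
    (hd : l * d ≡ c [MOD m]) (g : ℕ → A) :
    ∑ i ∈ Finset.range (l ^ (s + 1)).totient, g (p ^ i * c % (m * l ^ (s + 1))) +
        ∑ k ∈ Finset.range (l ^ s), g (l * (d % m + m * k)) =
      ∑ k ∈ Finset.range (l ^ (s + 1)), g (c % m + m * k) := by
  have : NeZero (l ^ (s + 1)) := ⟨pow_ne_zero _ hl.ne_zero⟩
  have hcop (x : ℕ) : x.Coprime (l ^ (s + 1)) ↔ ¬ l ∣ x := by
    rw [Nat.coprime_pow_right_iff s.succ_pos, Nat.coprime_comm, hl.coprime_iff_not_dvd]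
  rw [sum_pow_mul_mod_eq_sum_filter hm (hml.pow_right _) hpm hp (hc.pow_right _),
    ← sum_range_mul_filter_modEq_dvd hm hl.pos hml hd, ← pow_succ',
    ← sum_range_mul_filter_modEq hm _ c, add_comm]
  simp only [hcop, ← Finset.filter_filter]
  exact Finset.sum_filter_add_sum_filter_not _ _ _

theorem two_mul_sum_pow_mul_mod_add (hl : l.Prime) (hm : 0 < m)
    (hml : m.Coprime l) (hpm : p ≡ 1 [MOD m])
    (hp : orderOf (p : ZMod (l ^ (s + 1))) = (l ^ (s + 1)).totient) (hc : c.Coprime l)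
    (hd : l * d ≡ c [MOD m]) :
    2 * ∑ i ∈ Finset.range (l ^ (s + 1)).totient, p ^ i * c % (m * l ^ (s + 1)) +
        2 * l ^ (s + 1) * (d % m) =
      m * l ^ (s + 1) * (l ^ (s + 1)).totient + 2 * l ^ (s + 1) * (c % m) := by
  have h := sum_pow_mul_mod_add_sum_eq_sum hl hm hml hpm hp hc hd fun x ↦ (x : ℤ)
  have hgauss (n : ℕ) : 2 * ∑ k ∈ Finset.range n, (k : ℤ) = n * (n - 1) := by
    induction n with
    | zero => simp
    | succ n ih => rw [Finset.sum_range_succ, mul_add, ih]; push_cast; ring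
  have hφ : ((l ^ (s + 1)).totient : ℤ) = l ^ s * (l - 1) := by
    rw [Nat.totient_prime_pow_succ hl]
    push_cast [hl.one_le]
    rfl
  have h₁ := hgauss (l ^ (s + 1))
  have h₂ := hgauss (l ^ s)
  zify
  push_cast [Finset.sum_add_distrib, ← Finset.mul_sum] at h h₁ h₂ ⊢
  simp only [Finset.sum_const, Finset.card_range, nsmul_eq_mul] at h
  push_cast at h
  rw [hφ]
  linear_combination 2 * h + m * h₁ - l * m * h₂

theorem sum_pow_mul_mod_le {e : ℕ} (hl : l.Prime) (hle : l % 4 = 2 * e + 1) (hp4 : p % 4 = 1)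
    (hp : orderOf (p : ZMod (l ^ (s + 1))) = (l ^ (s + 1)).totient)
    (hc : c.Coprime (4 * l ^ (s + 1))) :
    ∑ i ∈ Finset.range (l ^ (s + 1)).totient, p ^ i * c % (4 * l ^ (s + 1)) ≤
      2 * l ^ (s + 1) * ((l ^ (s + 1)).totient + e) := by
  have hl4 : Nat.Coprime 4 l := .pow_left 2 (Nat.coprime_two_left.mpr (Nat.odd_iff.mpr (by omega)))
  have hll : l * l ≡ 1 [MOD 4] := by
    have : l % 4 = 1 ∨ l % 4 = 3 := by omega
    rcases this with h | h <;> simp [Nat.ModEq, Nat.mul_mod, h]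
  have hd : l * (l * c) ≡ c [MOD 4] := by simpa [mul_assoc] using hll.mul_right c
  have hsum := two_mul_sum_pow_mul_mod_add hl four_pos hl4 hp4 hp
    ((Nat.coprime_pow_right_iff s.succ_pos _ _).mp hc.coprime_mul_left_right) hd
  have hmod : c % 4 ≤ l * c % 4 + 2 * e := by
    have hc2 : c.Coprime 2 :=
      hc.coprime_mul_right_right.coprime_dvd_right (by norm_num : 2 ∣ 4)
    have hc2' : c % 2 = 1 := Nat.odd_iff.mp (Nat.Coprime.odd_of_right hc2)
    have : l % 4 = 1 ∧ e = 0 ∨ l % 4 = 3 ∧ e = 1 := by omega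
    rcases this with ⟨h, rfl⟩ | ⟨h, rfl⟩ <;> rw [Nat.mul_mod, h] <;> omega
  nlinarith [Nat.mul_le_mul_left (2 * l ^ (s + 1)) hmod]

end Orbit

section GaloisTrace

variable {K : Type*} [Field K] {S : Subring K}

theorem sum_mul_pow_mem_of_pow_eq_one {M : ℕ} {y w : K} (hw : w ^ M = 1) (hy : w = 1 → y ∈ S) :
    ∑ k ∈ Finset.range M, y * w ^ k ∈ S := by
  rw [← Finset.mul_sum]
  by_cases h : w = 1
  · exact mul_mem (hy h) (by simp [h])
  · rw [geom_sum_eq h, hw, sub_self, zero_div, mul_zero]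
    exact zero_mem S

theorem sum_pow_pow_mem {p m l s : ℕ} (hl : l.Prime) (hm : 0 < m) (hml : m.Coprime l)
    (hpm : p ≡ 1 [MOD m]) (hp : orderOf (p : ZMod (l ^ (s + 1))) = (l ^ (s + 1)).totient)
    (hS : ∀ w : K, w ^ m = 1 → w ∈ S) {z : K} (hz : z ^ (m * l ^ (s + 1)) = 1) :
    ∑ i ∈ Finset.range (l ^ (s + 1)).totient, z ^ p ^ i ∈ S := by
  obtain ⟨d, -, hd⟩ := Nat.exists_mul_mod_eq_of_coprime 1 hml.symm hm.ne'
  have h := sum_pow_mul_mod_add_sum_eq_sum hl hm hml hpm hp (Nat.coprime_one_left l) hd (z ^ ·)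
  simp only [mul_one, ← pow_eq_pow_mod _ hz] at h
  have hall : ∑ k ∈ Finset.range (l ^ (s + 1)), z ^ (1 % m + m * k) ∈ S := by
    simp only [pow_add z, pow_mul z m]
    refine sum_mul_pow_mem_of_pow_eq_one (by rw [← pow_mul, hz]) fun h ↦ hS _ ?_
    rw [pow_right_comm, h, one_pow]
  have hdvd : ∑ k ∈ Finset.range (l ^ s), z ^ (l * (d % m + m * k)) ∈ S := by
    simp only [mul_add, pow_add z, ← mul_assoc, pow_mul z (l * m)]
    refine sum_mul_pow_mem_of_pow_eq_one ?_ fun h ↦ hS _ ?_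
    · rw [← pow_mul, mul_right_comm, ← pow_succ', mul_comm, hz]
    · rw [← pow_mul, mul_right_comm, pow_mul, h, one_pow]
  rw [eq_sub_of_add_eq h]
  exact sub_mem hall hdvd

end GaloisTrace

section EisensteinSum

variable {K F R : Type*} [Field K] [Field F] [Algebra K F] [CommRing R]

variable (K) in
/-- The restriction of a multiplicative character of `F` to the subfield `K`. -/
noncomputable def restrictBase (χ : MulChar F R) : MulChar K R :=
  MulChar.ofUnitHom (χ.toUnitHom.comp (Units.map (algebraMap K F)))

theorem restrictBase_apply (χ : MulChar F R) (a : K) :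
    restrictBase K χ a = χ (algebraMap K F a) := by
  rcases eq_or_ne a 0 with rfl | ha
  · rw [map_zero (algebraMap K F), MulChar.map_zero, MulChar.map_zero]
  · exact MulChar.ofUnitHom_coe _ (Units.mk0 a ha)

variable (K) in
open Classical in
/-- The Eisenstein sum of a multiplicative character of `F` over `K`: the sum of its values at the
elements of trace `a`. -/
noncomputable def eisensteinSum [Fintype F] (χ : MulChar F R) (a : K) : R :=
  ∑ x with Algebra.trace K F x = a, χ x

variable [Fintype F]

theorem gaussSum_traceChar_mul_restrictBase_inv_mul [IsDomain R] {χ : MulChar F R} (hχ : χ ≠ 1)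
    (ψ : AddChar K R) (s : K) :
    gaussSum χ (traceChar F ψ) * ((restrictBase K χ)⁻¹ s * ψ s) =
      ∑ y, χ y * ψ (s * (Algebra.trace K F y + 1)) := by
  rcases eq_or_ne s 0 with rfl | hs
  · rw [MulChar.map_zero, zero_mul, mul_zero]
    simp [MulChar.sum_eq_zero_of_ne_one hχ]
  · have hshift := gaussSum_mulShift_eq χ (traceChar F ψ) ((Units.mk0 s hs).map (algebraMap K F))
    have hinv : (restrictBase K χ)⁻¹ s = χ⁻¹ (algebraMap K F s) := by
      rw [MulChar.inv_apply', MulChar.inv_apply', restrictBase_apply, map_inv₀]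
    rw [hinv, ← mul_assoc, mul_comm (gaussSum _ _)]
    refine (congrArg (· * ψ s) hshift).symm.trans ?_
    rw [gaussSum, Finset.sum_mul]
    refine Finset.sum_congr rfl fun y _ ↦ ?_
    rw [mul_add, mul_one, AddChar.map_add_eq_mul, ← mul_assoc]
    simp [AddChar.mulShift_apply, ← Algebra.smul_def]

variable [Fintype K]

theorem gaussSum_traceChar_mul_gaussSum_restrictBase_inv [IsDomain R] {χ : MulChar F R}
    (hχ : χ ≠ 1) {ψ : AddChar K R} (hψ : ψ ≠ 1) :
    gaussSum χ (traceChar F ψ) * gaussSum (restrictBase K χ)⁻¹ ψ =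
      Fintype.card K * eisensteinSum K χ (-1) := by
  classical
  rw [gaussSum.eq_def (restrictBase K χ)⁻¹, Finset.mul_sum]
  simp_rw [gaussSum_traceChar_mul_restrictBase_inv_mul hχ]
  rw [Finset.sum_comm]
  simp_rw [← Finset.mul_sum, AddChar.sum_mulShift _ (AddChar.IsPrimitive.of_ne_one hψ),
    ← eq_neg_iff_add_eq_zero]
  rw [eisensteinSum, Finset.mul_sum, Finset.sum_filter]
  refine Finset.sum_congr rfl fun y _ ↦ ?_
  split_ifs <;> simp [mul_comm]

theorem eisensteinSum_pow_card (χ : MulChar F R) (a : K) :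
    eisensteinSum K (χ ^ Fintype.card K) a = eisensteinSum K χ a := by
  classical
  refine Finset.sum_bijective _
    (FiniteField.frobeniusAlgEquivOfAlgebraic K F).bijective (fun x ↦ ?_) fun x _ ↦ ?_
  · simp [trace_pow_card]
  · simp [MulChar.pow_apply', Fintype.card_ne_zero]

theorem eisensteinSum_pow_card_pow (χ : MulChar F R) (a : K) (i : ℕ) :
    eisensteinSum K (χ ^ Fintype.card K ^ i) a = eisensteinSum K χ a := by
  induction i with
  | zero => rw [pow_zero, pow_one]
  | succ i ih => rw [pow_succ, pow_mul, eisensteinSum_pow_card, ih]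

open Classical in
theorem natCast_mul_eisensteinSum (χ : MulChar F R) (a : K) (n : ℕ) :
    n * eisensteinSum K χ a =
      ∑ x with Algebra.trace K F x = a, ∑ i ∈ Finset.range n, χ x ^ Fintype.card K ^ i := by
  simp_rw [← MulChar.pow_apply' χ (pow_ne_zero _ (Fintype.card_ne_zero (α := K)))]
  rw [Finset.sum_comm]
  refine Eq.trans ?_ (Finset.sum_congr rfl fun i _ ↦ (eisensteinSum_pow_card_pow χ a i).symm)
  rw [Finset.sum_const, Finset.card_range, nsmul_eq_mul]

end EisensteinSum

section RestrictBaseOrder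

variable {K F R : Type*} [Field K] [Field F] [Algebra K F] [CommRing R] [Fintype K] [Fintype F]

theorem orderOf_restrictBase (χ : MulChar F R) :
    orderOf (restrictBase K χ) =
      orderOf (χ ^ ((Fintype.card F - 1) / (Fintype.card K - 1))) := by
  have hnorm (n : ℕ) (y : Fˣ) :
      ((χ ^ ((Fintype.card F - 1) / (Fintype.card K - 1))) ^ n) y =
        (restrictBase K χ ^ n) (y.map (Algebra.norm K)) := by
    rw [MulChar.pow_apply_coe, MulChar.pow_apply_coe, MulChar.pow_apply_coe, restrictBase_apply,
      Units.coe_map, FiniteField.algebraMap_norm_eq_pow, map_pow,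
      Nat.card_eq_fintype_card, Nat.card_eq_fintype_card]
  rw [orderOf_eq_orderOf_iff]
  intro n
  rw [MulChar.eq_one_iff, MulChar.eq_one_iff]
  refine ⟨fun h y ↦ (hnorm n y).trans (h _), fun h s ↦ ?_⟩
  obtain ⟨y, rfl⟩ := FiniteField.unitsMap_norm_surjective K F s
  exact (hnorm n y).symm.trans (h y)

end RestrictBaseOrder

theorem not_modEq_one_of_orderOf_eq_totient {p l s : ℕ} (hl : l.Prime) (hl2 : l ≠ 2)
    (hp : orderOf (p : ZMod (l ^ (s + 1))) = (l ^ (s + 1)).totient) : ¬ p ≡ 1 [MOD l] := by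
  intro h
  have : NeZero (l ^ (s + 1)) := ⟨pow_ne_zero _ hl.ne_zero⟩
  obtain ⟨i, -, hi⟩ := exists_pow_mul_modEq_of_orderOf_eq_totient hp (Nat.coprime_one_left _)
    (((Nat.coprime_primes Nat.prime_two hl).mpr hl2.symm).pow_right (s + 1))
  have h2 : 1 ≡ 2 [MOD l] :=
    (by simpa using (h.pow i).symm : 1 ≡ p ^ i * 1 [MOD l]).trans
      (hi.of_dvd (dvd_pow_self l s.succ_ne_zero))
  exact hl.not_dvd_one ((Nat.modEq_iff_dvd' one_le_two).mp h2)

theorem pow_dvd_geom_sum_of_orderOf_eq_totient {p l s : ℕ} (hp1 : 1 ≤ p) (hl : l.Prime)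
    (hl2 : l ≠ 2) (hp : orderOf (p : ZMod (l ^ (s + 1))) = (l ^ (s + 1)).totient) :
    l ^ (s + 1) ∣ ∑ i ∈ Finset.range (l ^ (s + 1)).totient, p ^ i := by
  have hcop : (l ^ (s + 1)).Coprime (p - 1) := by
    refine (hl.coprime_iff_not_dvd.mpr fun h ↦ ?_).pow_left _
    exact not_modEq_one_of_orderOf_eq_totient hl hl2 hp ((Nat.modEq_iff_dvd' hp1).mpr h).symm
  refine hcop.dvd_of_dvd_mul_right ?_
  rw [geom_sum_mul_of_one_le hp1, ← Nat.modEq_iff_dvd' (Nat.one_le_pow _ _ hp1),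
    ← ZMod.natCast_eq_natCast_iff, Nat.cast_pow, ← hp, pow_orderOf_eq_one, Nat.cast_one]

theorem totient_prime_pow_succ_modEq {l e s : ℕ} (hl : l.Prime) (hle : l % 4 = 2 * e + 1) :
    (l ^ (s + 1)).totient ≡ 2 * e [MOD 4] := by
  have hls : l ^ s % 2 = 1 := Nat.odd_iff.mp (.pow (Nat.odd_iff.mpr (by omega)))
  rw [Nat.totient_prime_pow_succ hl, Nat.ModEq, Nat.mul_mod]
  have he : (l - 1) % 4 = 2 * e := by omega
  have : e = 0 ∨ e = 1 := by omega
  rw [he]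
  rcases this with rfl | rfl <;> omega

theorem geom_sum_modEq_of_modEq_one {p m : ℕ} (hpm : p ≡ 1 [MOD m]) (n : ℕ) :
    ∑ i ∈ Finset.range n, p ^ i ≡ n [MOD m] := by
  simpa using Nat.ModEq.sum (s := Finset.range n) fun i _ ↦ hpm.pow i

theorem orderOf_restrictBase_eq_two_pow {p l s e : ℕ} [Fact p.Prime] (hl : l.Prime)
    (hle : l % 4 = 2 * e + 1) (hp4 : p % 4 = 1)
    (hp : orderOf (p : ZMod (l ^ (s + 1))) = (l ^ (s + 1)).totient) {F R : Type*} [Field F]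
    [Fintype F] [Algebra (ZMod p) F] (hcard : Fintype.card F = p ^ (l ^ (s + 1)).totient)
    [CommRing R] {χ : MulChar F R} (hχ : orderOf χ = 4 * l ^ (s + 1)) :
    orderOf (restrictBase (ZMod p) χ) = 2 ^ e := by
  have hp2 := (Fact.out : p.Prime).two_le
  have hl2 : l ≠ 2 := by omega
  have hcop : Nat.Coprime 4 (l ^ (s + 1)) :=
    ((Nat.coprime_primes Nat.prime_two hl).mpr hl2.symm).pow 2 (s + 1)
  have hgcd := ((geom_sum_modEq_of_modEq_one hp4 _).trans
    (totient_prime_pow_succ_modEq (s := s) hl hle)).gcd_eq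
  have hfin : IsOfFinOrder χ := orderOf_pos_iff.mp (hχ ▸ mul_pos four_pos (pow_pos hl.pos _))
  rw [orderOf_restrictBase, hcard, ZMod.card, ← Nat.geomSum_eq hp2, hfin.orderOf_pow, hχ,
    Nat.gcd_comm, hcop.gcd_mul, hgcd,
    Nat.gcd_eq_right (pow_dvd_geom_sum_of_orderOf_eq_totient (one_le_two.trans hp2) hl hl2 hp),
    Nat.mul_div_mul_right _ _ (pow_pos hl.pos _)]
  have : e = 0 ∨ e = 1 := by omega
  rcases this with rfl | rfl <;> rfl

section GaussSumSquare

variable {F R : Type*} [Field F] [Fintype F] [CommRing R] [IsDomain R]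

theorem gaussSum_sq_eq_card_of_orderOf_eq_two (hF : IsSquare (-1 : F)) {η : MulChar F R}
    (hη : orderOf η = 2) {ψ : AddChar F R} (hψ : ψ ≠ 1) :
    gaussSum η ψ ^ 2 = Fintype.card F := by
  have hη2 : η ^ 2 = 1 := hη ▸ pow_orderOf_eq_one η
  have hη1 : η ≠ 1 := by
    rintro rfl
    simp at hη
  rw [gaussSum_sq hη1 (MulChar.isQuadratic_iff_sq_eq_one.mpr hη2) (.of_ne_one hψ)]
  obtain ⟨t, ht⟩ := hF
  have ht0 : IsUnit t := isUnit_of_mul_isUnit_left (ht ▸ isUnit_one.neg)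
  rw [ht, map_mul, ← pow_two, ← MulChar.pow_apply' _ two_ne_zero, hη2, MulChar.one_apply ht0,
    one_mul]

theorem gaussSum_sq_eq_card_pow (hF : IsSquare (-1 : F)) {η : MulChar F R} {e : ℕ} (he : e ≤ 1)
    (hη : orderOf η = 2 ^ e) {ψ : AddChar F R} (hψ : ψ ≠ 1) :
    gaussSum η ψ ^ 2 = Fintype.card F ^ e := by
  rcases Nat.le_one_iff_eq_zero_or_eq_one.mp he with rfl | rfl
  · rw [orderOf_eq_one_iff.mp hη, gaussSum_one_left hψ, neg_one_sq, pow_zero]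
  · rw [gaussSum_sq_eq_card_of_orderOf_eq_two hF hη hψ, pow_one]

end GaussSumSquare

section Descent

theorem mem_range_of_mul_mem_range {R K : Type*} [CommRing R] [IsDomain R] [IsIntegrallyClosed R]
    [Field K] {i : R →+* K} (hi : Function.Injective i) {n : R} (hn : n ≠ 0) {x : K}
    (hx : IsIntegral ℤ x) (h : i n * x ∈ i.range) : x ∈ i.range := by
  obtain ⟨r, hr⟩ := h
  algebraize [i]
  let φ : FractionRing R →ₐ[R] K := IsFractionRing.liftAlgHom (g := Algebra.ofId R K) hi
  have hφ : φ (algebraMap R _ r / algebraMap R _ n) = x := by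
    rw [map_div₀, φ.commutes, φ.commutes]
    exact (div_eq_iff ((map_ne_zero_iff i hi).mpr hn)).mpr (hr.trans (mul_comm _ _))
  have hint : IsIntegral R (φ (algebraMap R _ r / algebraMap R _ n)) := hφ ▸ hx.tower_top
  obtain ⟨t, ht⟩ := IsIntegrallyClosed.isIntegral_iff.mp
    ((isIntegral_algHom_iff φ φ.injective).mp hint)
  exact ⟨t, by rw [← hφ, ← ht, φ.commutes]; rfl⟩

theorem eq_of_pow_four_eq_one {z : ℂ} (h : z ^ 4 = 1) :
    z = 1 ∨ z = -1 ∨ z = Complex.I ∨ z = -Complex.I := by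
  have hsq : (z ^ 2) ^ 2 = 1 := by rw [← pow_mul, h]
  rcases sq_eq_one_iff.mp hsq with h | h
  · exact (sq_eq_one_iff.mp h).imp_right .inl
  · rw [← Complex.I_sq] at h
    exact .inr (.inr (sq_eq_sq_iff_eq_or_eq_neg.mp h))

theorem mem_range_toComplex_of_pow_four_eq_one {z : ℂ} (h : z ^ 4 = 1) :
    z ∈ GaussianInt.toComplex.range := by
  have hI : Complex.I ∈ GaussianInt.toComplex.range :=
    ⟨⟨0, 1⟩, by simp [GaussianInt.toComplex_def']⟩
  rcases eq_of_pow_four_eq_one h with rfl | rfl | rfl | rfl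
  exacts [one_mem _, neg_mem (one_mem _), hI, neg_mem hI]

theorem toComplex_pow_four_eq_one_of_norm_eq_one {z : GaussianInt} (h : z.norm = 1) :
    GaussianInt.toComplex z ^ 4 = 1 := by
  have hsum : z.re * z.re + z.im * z.im = 1 := by
    rw [Zsqrtd.norm_def] at h
    linarith
  have hmul : z.re * z.im = 0 := by
    have hre : z.re * z.re ≤ 1 := by linarith [mul_self_nonneg z.im]
    rcases Int.abs_le_one_iff.mp (abs_le_one_iff_mul_self_le_one.mpr hre) with h₀ | h₁ | h₁
    · rw [h₀, zero_mul]
    all_goals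
      rw [h₁] at hsum
      rw [mul_self_eq_zero.mp (by linarith : z.im * z.im = 0), mul_zero]
  have hsum' : (z.re * z.re + z.im * z.im : ℂ) = 1 := mod_cast hsum
  have hmul' : (z.re * z.im : ℂ) = 0 := mod_cast hmul
  rw [GaussianInt.toComplex_def]
  linear_combination (z.re ^ 2 + z.im ^ 2 + 1 : ℂ) * hsum' +
    (4 * z.re ^ 2 * Complex.I - 8 * z.re * z.im - 4 * z.im ^ 2 * Complex.I) * hmul' +
    (6 * z.re ^ 2 * z.im ^ 2 + 4 * z.re * z.im ^ 3 * Complex.I +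
      z.im ^ 4 * (Complex.I ^ 2 - 1)) * Complex.I_sq

end Descent

theorem norm_gaussSum_sq {F : Type*} [Field F] [Fintype F] {χ : MulChar F ℂ} (hχ : χ ≠ 1)
    {ψ : AddChar F ℂ} (hψ : ψ ≠ 1) : ‖gaussSum χ ψ‖ ^ 2 = Fintype.card F := by
  have h := gaussSum_mul_gaussSum_eq_card hχ (.of_ne_one hψ)
  rw [← star_gaussSum_eq, Complex.star_def, Complex.mul_conj'] at h
  exact_mod_cast h

theorem ne_one_of_dvd_orderOf {G : Type*} [Monoid G] {x : G} {m : ℕ} (hm : m ≠ 1)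
    (h : m ∣ orderOf x) : x ≠ 1 := by
  rintro rfl
  exact hm (Nat.dvd_one.mp (orderOf_one (G := G) ▸ h))

theorem even_totient_prime_pow_succ {l s : ℕ} (hl : l.Prime) (hl2 : l ≠ 2) :
    Even (l ^ (s + 1)).totient :=
  Nat.totient_even ((lt_of_le_of_ne hl.two_le hl2.symm).trans_le
    (Nat.le_self_pow s.succ_ne_zero l))

section GaussSumProduct

variable {p l s e : ℕ} [Fact p.Prime] (hl : l.Prime) (hp4 : p % 4 = 1)
  (hp : orderOf (p : ZMod (l ^ (s + 1))) = (l ^ (s + 1)).totient)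
  {F K : Type*} [Field F] [Fintype F] [Algebra (ZMod p) F] [Field K]

include hl hp in
theorem totient_mul_eisensteinSum_mem {m : ℕ} (hm : 0 < m) (hml : m.Coprime l)
    (hpm : p ≡ 1 [MOD m]) {S : Subring K} (hS : ∀ w : K, w ^ m = 1 → w ∈ S) {χ : MulChar F K}
    (hχ : orderOf χ = m * l ^ (s + 1)) (a : ZMod p) :
    ((l ^ (s + 1)).totient : K) * eisensteinSum (ZMod p) χ a ∈ S := by
  rw [natCast_mul_eisensteinSum, ZMod.card]
  refine sum_mem fun x _ ↦ ?_
  rcases eq_or_ne x 0 with rfl | hx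
  · have hp0 (i : ℕ) : p ^ i ≠ 0 := pow_ne_zero i (Fact.out : p.Prime).ne_zero
    simp only [MulChar.map_zero, zero_pow (hp0 _), Finset.sum_const_zero, zero_mem]
  · refine sum_pow_pow_mem hl hm hml hpm hp hS ?_
    rw [← MulChar.pow_apply' _ (mul_ne_zero hm.ne' (pow_ne_zero _ hl.ne_zero)), ← hχ,
      pow_orderOf_eq_one, MulChar.one_apply hx.isUnit]

variable (hle : l % 4 = 2 * e + 1) (hcard : Fintype.card F = p ^ (l ^ (s + 1)).totient)

include hl hle hp4 hp hcard

theorem gaussSum_restrictBase_sq {χ : MulChar F K} (hχ : orderOf χ = 4 * l ^ (s + 1))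
    {ψ : AddChar (ZMod p) K} (hψ : ψ ≠ 1) :
    gaussSum (restrictBase (ZMod p) χ) ψ ^ 2 = (p : K) ^ e := by
  have hsq : IsSquare (-1 : ZMod p) := ZMod.exists_sq_eq_neg_one_iff.mpr (by omega)
  have he : e ≤ 1 := by omega
  rw [gaussSum_sq_eq_card_pow hsq he
    (orderOf_restrictBase_eq_two_pow hl hle hp4 hp hcard hχ) hψ, ZMod.card]

theorem isIntegral_gaussSum_mul_div [IsAlgClosed K] [CharZero K] {χ : MulChar F K}
    (hχ : orderOf χ = 4 * l ^ (s + 1)) {ψ : AddChar (ZMod p) K} (hψ : ψ ≠ 1) :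
    IsIntegral ℤ (gaussSum χ (traceChar F ψ) * gaussSum (restrictBase (ZMod p) χ) ψ /
      (p : K) ^ ((l ^ (s + 1)).totient / 2)) := by
  have hχ₁ := ne_one_of_dvd_orderOf (by norm_num) (hχ ▸ dvd_mul_right 4 _)
  have hpow := isIntegral_pow_div_gaussSum_pow hcard (inv_ne_one.mpr hχ₁) (inv_ne_one.mpr hψ)
    fun c _ hc ↦ by
      rw [orderOf_inv, hχ] at hc ⊢
      exact sum_pow_mul_mod_le hl hle hp4 hp hc
  have hG := gaussSum_traceChar_mul_gaussSum_inv hχ₁ hψ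
  have hg := gaussSum_restrictBase_sq hl hp4 hp hle hcard hχ hψ
  obtain ⟨n, hn⟩ : 2 ∣ (l ^ (s + 1)).totient :=
    (even_totient_prime_pow_succ hl (by omega)).two_dvd
  have hp0 : (p : K) ≠ 0 := Nat.cast_ne_zero.mpr (Fact.out : p.Prime).ne_zero
  rw [hcard, hn, Nat.cast_pow] at hG
  have hG' : gaussSum χ⁻¹ (traceChar F ψ⁻¹) ≠ 0 := right_ne_zero_of_mul (hG ▸ pow_ne_zero _ hp0)
  rw [orderOf_inv, hχ, hn] at hpow
  rw [hn, Nat.mul_div_cancel_left _ two_pos]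
  refine .of_pow (n := 4 * l ^ (s + 1)) (mul_pos four_pos (pow_pos hl.pos _)) ?_
  convert hpow using 1
  rw [div_pow, div_eq_div_iff (pow_ne_zero _ (pow_ne_zero _ hp0)) (pow_ne_zero _ hG')]
  calc _ = (gaussSum χ (traceChar F ψ) * gaussSum χ⁻¹ (traceChar F ψ⁻¹)) ^ (4 * l ^ (s + 1)) *
        (gaussSum (restrictBase (ZMod p) χ) ψ ^ 2) ^ (2 * l ^ (s + 1)) := by ring
    _ = _ := by rw [hG, hg]; ring

theorem gaussSum_mul_gaussSum_restrictBase {χ : MulChar F K} (hχ : orderOf χ = 4 * l ^ (s + 1))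
    {ψ : AddChar (ZMod p) K} (hψ : ψ ≠ 1) :
    gaussSum χ (traceChar F ψ) * gaussSum (restrictBase (ZMod p) χ) ψ =
      p * eisensteinSum (ZMod p) χ (-1) := by
  have horder := orderOf_restrictBase_eq_two_pow hl hle hp4 hp hcard hχ
  have hinv : (restrictBase (ZMod p) χ)⁻¹ = restrictBase (ZMod p) χ := by
    have hdvd : orderOf (restrictBase (ZMod p) χ) ∣ 2 :=
      horder ▸ pow_dvd_pow 2 (by omega : e ≤ 1)
    rw [inv_eq_iff_mul_eq_one, ← pow_two, ← orderOf_dvd_iff_pow_eq_one]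
    exact hdvd
  have hχ₁ := ne_one_of_dvd_orderOf (by norm_num) (hχ ▸ dvd_mul_right 4 _)
  have h := gaussSum_traceChar_mul_gaussSum_restrictBase_inv hχ₁ hψ
  rwa [hinv, ZMod.card] at h

theorem gaussSum_mul_div_mem_range_toComplex {χ : MulChar F ℂ} (hχ : orderOf χ = 4 * l ^ (s + 1))
    {ψ : AddChar (ZMod p) ℂ} (hψ : ψ ≠ 1) :
    gaussSum χ (traceChar F ψ) * gaussSum (restrictBase (ZMod p) χ) ψ /
      (p : ℂ) ^ ((l ^ (s + 1)).totient / 2) ∈ GaussianInt.toComplex.range := by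
  have hl4 : Nat.Coprime 4 l := .pow_left 2 (Nat.coprime_two_left.mpr (Nat.odd_iff.mpr (by omega)))
  have hφ : (l ^ (s + 1)).totient ≠ 0 := (Nat.totient_pos.mpr (pow_pos hl.pos _)).ne'
  have hp0 : p ^ ((l ^ (s + 1)).totient / 2) ≠ 0 := pow_ne_zero _ (Fact.out : p.Prime).ne_zero
  have hE := totient_mul_eisensteinSum_mem hl hp four_pos hl4 hp4
    (fun _ ↦ mem_range_toComplex_of_pow_four_eq_one) hχ (-1)
  refine mem_range_of_mul_mem_range GaussianInt.toComplex_injective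
    (Nat.cast_ne_zero.mpr (mul_ne_zero hφ hp0))
    (isIntegral_gaussSum_mul_div hl hp4 hp hle hcard hχ hψ) ?_
  rw [map_natCast, Nat.cast_mul, mul_assoc, ← Nat.cast_pow,
    mul_div_cancel₀ _ (Nat.cast_ne_zero.mpr hp0),
    gaussSum_mul_gaussSum_restrictBase hl hp4 hp hle hcard hχ hψ, mul_left_comm]
  exact mul_mem (natCast_mem _ p) hE

theorem exists_gaussSum_mul_eq {χ : MulChar F ℂ} (hχ : orderOf χ = 4 * l ^ (s + 1))
    {ψ : AddChar (ZMod p) ℂ} (hψ : ψ ≠ 1) :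
    ∃ z : GaussianInt, z.norm = (p : ℤ) ^ e ∧
      gaussSum χ (traceChar F ψ) * gaussSum (restrictBase (ZMod p) χ) ψ =
        (p : ℂ) ^ ((l ^ (s + 1)).totient / 2) * GaussianInt.toComplex z := by
  obtain ⟨z, hz⟩ := gaussSum_mul_div_mem_range_toComplex hl hp4 hp hle hcard hχ hψ
  have hp0 : (p : ℂ) ≠ 0 := Nat.cast_ne_zero.mpr (Fact.out : p.Prime).ne_zero
  rw [eq_div_iff (pow_ne_zero _ hp0), mul_comm] at hz
  refine ⟨z, ?_, hz.symm⟩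
  have hχ₁ := ne_one_of_dvd_orderOf (by norm_num) (hχ ▸ dvd_mul_right 4 _)
  have hG := norm_gaussSum_sq hχ₁ (traceChar_ne_one (F := F) hψ)
  have hg : ‖gaussSum (restrictBase (ZMod p) χ) ψ‖ ^ 2 = (p : ℝ) ^ e := by
    rw [← norm_pow, gaussSum_restrictBase_sq hl hp4 hp hle hcard hχ hψ, norm_pow,
      Complex.norm_natCast]
  have hnorm := congrArg (‖·‖ ^ 2) hz
  simp only [norm_mul, norm_pow, Complex.norm_natCast, mul_pow] at hnorm
  rw [hG, hg, ← pow_mul, hcard, mul_comm _ 2, Nat.two_mul_div_two_of_even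
      (even_totient_prime_pow_succ hl (by omega)), Nat.cast_pow,
    ← Complex.normSq_eq_norm_sq, ← GaussianInt.intCast_real_norm] at hnorm
  exact_mod_cast mul_left_cancel₀ (pow_ne_zero _ (by exact_mod_cast hp0)) hnorm

end GaussSumProduct

theorem totient_four_mul_of_odd {n : ℕ} (hn : Odd n) : (4 * n).totient = 2 * n.totient := by
  rw [Nat.totient_mul ((Nat.coprime_two_left.mpr hn).pow_left 2)]
  rfl

section ComplexGaussSum

theorem exists_addChar_apply_eq_zetaP_pow {p : ℕ} [Fact p.Prime] :
    ∃ ψ : AddChar (ZMod p) ℂ, ψ ≠ 1 ∧ ∀ a, ψ a = zetaP p ^ a.val := by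
  have hζ : IsPrimitiveRoot (zetaP p) p := Complex.isPrimitiveRoot_exp p (NeZero.ne p)
  refine ⟨AddChar.zmodChar p hζ.pow_eq_one, ?_, AddChar.zmodChar_apply _⟩
  rw [AddChar.zmod_char_ne_one_iff, AddChar.zmodChar_apply, ZMod.val_one, pow_one]
  exact hζ.ne_one (Fact.out : p.Prime).one_lt

theorem gaussSumN_one_eq_gaussSum {p : ℕ} [Fact p.Prime] {F : Type} [Field F] [Fintype F]
    [Algebra (ZMod p) F] (χ : MulChar F ℂ) {ψ : AddChar (ZMod p) ℂ}
    (hψ : ∀ a, ψ a = zetaP p ^ a.val) :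
    gaussSumN p χ 1 = gaussSum χ (traceChar F ψ) := by
  classical
  rw [gaussSumN, gaussSum, pow_one, Finset.sum_filter]
  refine Finset.sum_congr rfl fun x _ ↦ ?_
  rw [traceChar_apply, hψ]
  split_ifs with hx
  · rfl
  · rw [not_not.mp hx, MulChar.map_zero, zero_mul]

variable {p l s e : ℕ} [Fact p.Prime] (hl : l.Prime) (hp4 : p % 4 = 1)
  (hp : orderOf (p : ZMod (l ^ (s + 1))) = (l ^ (s + 1)).totient)
  {F : Type} [Field F] [Fintype F] [Algebra (ZMod p) F]
  (hcard : Fintype.card F = p ^ (l ^ (s + 1)).totient) {χ : MulChar F ℂ}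
  (hχ : orderOf χ = 4 * l ^ (s + 1))

include hl hp4 hp hcard hχ

theorem exists_gaussSumN_mul_eq (hle : l % 4 = 2 * e + 1) :
    ∃ (g : ℂ) (z : GaussianInt), g ^ 2 = (p : ℂ) ^ e ∧ z.norm = (p : ℤ) ^ e ∧
      gaussSumN p χ 1 * (p : ℂ) ^ e =
        g * (p : ℂ) ^ (((l ^ (s + 1)).totient : ℤ) / 2) * GaussianInt.toComplex z := by
  obtain ⟨ψ, hψ₁, hψ⟩ := exists_addChar_apply_eq_zetaP_pow (p := p)
  obtain ⟨z, hz, h⟩ := exists_gaussSum_mul_eq hl hp4 hp hle hcard hχ hψ₁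
  have hg := gaussSum_restrictBase_sq hl hp4 hp hle hcard hχ hψ₁
  refine ⟨_, z, hg, hz, ?_⟩
  have hexp : (p : ℂ) ^ (((l ^ (s + 1)).totient : ℤ) / 2) =
      (p : ℂ) ^ ((l ^ (s + 1)).totient / 2) := by norm_cast
  rw [gaussSumN_one_eq_gaussSum χ hψ, hexp, ← hg, pow_two, ← mul_assoc, h]
  ring

theorem gaussSumN_eq_of_mod_four_eq_one (hl1 : l % 4 = 1) :
    ∃ ε : ℂ, (ε = 1 ∨ ε = -1 ∨ ε = Complex.I ∨ ε = -Complex.I) ∧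
      gaussSumN p χ 1 = ε * (p : ℂ) ^ (((l ^ (s + 1)).totient : ℤ) / 2) := by
  obtain ⟨g, z, hg, hz, h⟩ := exists_gaussSumN_mul_eq (e := 0) hl hp4 hp hcard hχ hl1
  rw [pow_zero] at hg hz
  refine ⟨g * GaussianInt.toComplex z, eq_of_pow_four_eq_one ?_, ?_⟩
  · rw [mul_pow, toComplex_pow_four_eq_one_of_norm_eq_one hz, pow_mul g 2 2, hg, one_pow,
      one_mul]
  · rw [mul_right_comm, ← h, pow_zero, mul_one]

theorem gaussSumN_eq_of_mod_four_eq_three (hl3 : l % 4 = 3) :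
    ∃ ε : ℂ, (ε = 1 ∨ ε = -1 ∨ ε = Complex.I ∨ ε = -Complex.I) ∧
      ∃ a b : ℤ, a ^ 2 + b ^ 2 = (p : ℤ) ∧
        gaussSumN p χ 1 =
          ε * (Real.sqrt p : ℂ) * (p : ℂ) ^ (((l ^ (s + 1)).totient : ℤ) / 2 - 1) *
            ((a : ℂ) + (b : ℂ) * Complex.I) := by
  obtain ⟨g, z, hg, hz, h⟩ := exists_gaussSumN_mul_eq (e := 1) hl hp4 hp hcard hχ hl3
  have hp0 : (p : ℂ) ≠ 0 := Nat.cast_ne_zero.mpr (NeZero.ne p)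
  have hsqrt : (Real.sqrt p : ℂ) ^ 2 = p := by
    rw [← Complex.ofReal_pow, Real.sq_sqrt p.cast_nonneg, Complex.ofReal_natCast]
  have hG : gaussSumN p χ 1 =
      g * (p : ℂ) ^ (((l ^ (s + 1)).totient : ℤ) / 2 - 1) * (z.re + z.im * Complex.I) := by
    rw [pow_one, ← eq_div_iff hp0] at h
    rw [h, zpow_sub_one₀ hp0, GaussianInt.toComplex_def]
    ring
  have hnorm : z.re ^ 2 + z.im ^ 2 = (p : ℤ) := by
    rw [pow_one, Zsqrtd.norm_def] at hz
    linarith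
  rw [pow_one, ← hsqrt] at hg
  rcases sq_eq_sq_iff_eq_or_eq_neg.mp hg with rfl | rfl
  · exact ⟨1, .inl rfl, z.re, z.im, hnorm, by rw [hG, one_mul]⟩
  · exact ⟨-1, .inr (.inl rfl), z.re, z.im, hnorm, by rw [hG, neg_one_mul]⟩

end ComplexGaussSum

theorem statement14 (p l r N f : ℕ) (hp : p.Prime) (hl : l.Prime) (hlodd : l % 2 = 1)
    (hr : 1 ≤ r) (hN : N = 4 * l ^ r) (hNp : Nat.gcd N p = 1) (hp4 : p % 4 = 1)
    (hord : orderOf (p : ZMod (l ^ r)) = Nat.totient (l ^ r))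
    (hf : orderOf (p : ZMod N) = f) (hind : f = Nat.totient N / 2)
    (F : Type) [Field F] [Fintype F] [Algebra (ZMod p) F]
    (hcard : Fintype.card F = p ^ f)
    (χ : MulChar F ℂ) (hχord : orderOf χ = N) :
    (l % 4 = 1 →
      ∃ ε : ℂ, (ε = 1 ∨ ε = -1 ∨ ε = Complex.I ∨ ε = -Complex.I) ∧
        gaussSumN p χ 1 = ε * (p : ℂ) ^ ((f : ℤ) / 2)) ∧
    (l % 4 = 3 →
      ∃ ε : ℂ, (ε = 1 ∨ ε = -1 ∨ ε = Complex.I ∨ ε = -Complex.I) ∧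
        ∃ a b : ℤ, a ^ 2 + b ^ 2 = (p : ℤ) ∧
          gaussSumN p χ 1 =
            ε * (Real.sqrt p : ℂ) * (p : ℂ) ^ ((f : ℤ) / 2 - 1) *
              ((a : ℂ) + (b : ℂ) * Complex.I)) := by
  subst hN
  have : Fact p.Prime := ⟨hp⟩
  obtain ⟨s, rfl⟩ := Nat.exists_eq_add_one_of_ne_zero (Nat.one_le_iff_ne_zero.mp hr)
  rw [totient_four_mul_of_odd (.pow (Nat.odd_iff.mpr hlodd)),
    Nat.mul_div_cancel_left _ two_pos] at hind
  rw [hind] at hcard ⊢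
  exact ⟨gaussSumN_eq_of_mod_four_eq_one hl hp4 hord hcard hχord,
    gaussSumN_eq_of_mod_four_eq_three hl hp4 hord hcard hχord⟩
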